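/- There exists a constant C > 0 such that for every real δ > √e, every real ε > 0, and every positive integer k with πεk ≤ 2/3, writing K_j = K_j(πεk), the normal Stokes slender-body PDE eigenvalue λⁿ = 2π²εk·(4K₁²K₂ + πεk·K₁·(K₁² − K₀K₂)) / (2K₀K₁K₂ + πεk·(K₁²(K₀ + K₂) − 2K₀²K₂)) and the δ-regularized normal eigenvalue λ^{δ,n} = 8π/(1 + 2·log δ + 2·K₀(δπεk)) satisfy the refined bound |λⁿ − λ^{δ,n}| ≤ C·δ²·(1 + log δ)·ε²·k². -/

import Mathlib

open Real

/-- Modified Bessel function of the second kind of order `j`: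
`K_j(z) = ∫₀^∞ exp (−z cosh t) * cosh (j t) dt`. -/
noncomputable def besselK (j : ℕ) (z : ℝ) : ℝ :=
  ∫ t in Set.Ioi (0 : ℝ), Real.exp (-z * Real.cosh t) * Real.cosh ((j : ℝ) * t)

/-!
Write `z = πεk`. The recurrence for `K₂`, an integration by parts, turns the quotient in `λⁿ` into
one with a manifestly nonnegative denominator in `a = K₀(z)` and `b = z * K₁(z)`. Comparing
`exp (-z * cosh t)` with `exp (-z * sinh t)`, whose integral against `cosh t` is explicit, gives
`0 ≤ 1 - b ≤ z ^ 2 * exp z * a`. For small `z` this makes `λⁿ` agree with the unregularized value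
`8π / (1 + 2a)`, which is the case `δ = 1` of `λ^{δ,n}`, up to `O(z ^ 2)`. The same estimate bounds
the derivative of `log + K₀`, and integrating it from `z` to `δz` controls the effect of `δ`.
When `z` or `δz` is at least `1`, the eigenvalues themselves are already of the required size.
-/

open Asymptotics Filter MeasureTheory Set Topology

section Integrands

variable {z : ℝ}

lemma isLittleO_exp_neg_mul_cosh (hz : 0 < z) (c : ℝ) :
    (fun t ↦ exp (-z * cosh t)) =o[atTop] fun t ↦ exp (c * t) := by
  rw [isLittleO_exp_comp_exp_comp]
  have h_linear : Tendsto (fun t ↦ z / 4 * t + c) atTop atTop :=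
    tendsto_atTop_add_const_right _ _ (tendsto_id.const_mul_atTop (by positivity))
  refine tendsto_atTop_mono' _ ?_ (tendsto_id.atTop_mul_atTop₀ h_linear)
  filter_upwards [eventually_ge_atTop 0] with t ht
  have h_cosh : t ^ 2 / 4 ≤ cosh t := by
    rw [cosh_eq]
    linarith [quadratic_le_exp_of_nonneg ht, exp_pos (-t)]
  have := mul_le_mul_of_nonneg_left h_cosh hz.le
  simp only [id]
  linarith

lemma isBigO_exp_neg_mul_cosh_mul (hz : 0 < z) {f : ℝ → ℝ} {c : ℝ}
    (hf : f =O[atTop] fun t ↦ exp (c * t)) :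
    (fun t ↦ exp (-z * cosh t) * f t) =O[atTop] fun t ↦ exp (-t) := by
  refine ((isLittleO_exp_neg_mul_cosh hz (-(c + 1))).isBigO.mul hf).congr_right fun t ↦ ?_
  rw [← exp_add]
  ring_nf

lemma integrableOn_exp_neg_mul_cosh_mul (hz : 0 < z) {f : ℝ → ℝ} {c : ℝ} (hfc : Continuous f)
    (hf : f =O[atTop] fun t ↦ exp (c * t)) :
    IntegrableOn (fun t ↦ exp (-z * cosh t) * f t) (Ioi 0) :=
  integrable_of_isBigO_exp_neg one_pos (by fun_prop)
    (by simpa using isBigO_exp_neg_mul_cosh_mul hz hf)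

lemma isBigO_cosh_mul {a : ℝ} (ha : 0 ≤ a) :
    (fun t ↦ cosh (a * t)) =O[atTop] fun t ↦ exp (a * t) := by
  refine IsBigO.of_bound 1 ?_
  filter_upwards [eventually_ge_atTop 0] with t ht
  have h_exp : exp (-(a * t)) ≤ exp (a * t) := exp_le_exp.2 (neg_le_self (by positivity))
  rw [one_mul, norm_of_nonneg (cosh_pos _).le, norm_of_nonneg (exp_pos _).le, cosh_eq]
  linarith

lemma abs_sinh_le_cosh (x : ℝ) : |sinh x| ≤ cosh x := by
  rw [abs_sinh, ← cosh_abs]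
  exact (sinh_lt_cosh _).le

lemma isBigO_sinh_mul {a : ℝ} (ha : 0 ≤ a) :
    (fun t ↦ sinh (a * t)) =O[atTop] fun t ↦ exp (a * t) :=
  (IsBigO.of_norm_le fun t ↦ abs_sinh_le_cosh (a * t)).trans (isBigO_cosh_mul ha)

lemma integrableOn_besselK_integrand (hz : 0 < z) (j : ℕ) :
    IntegrableOn (fun t ↦ exp (-z * cosh t) * cosh (j * t)) (Ioi 0) :=
  integrableOn_exp_neg_mul_cosh_mul hz (by fun_prop) (isBigO_cosh_mul j.cast_nonneg)

lemma integrableOn_exp_neg_mul_cosh (hz : 0 < z) :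
    IntegrableOn (fun t ↦ exp (-z * cosh t)) (Ioi 0) := by
  simpa using integrableOn_besselK_integrand hz 0

lemma integrableOn_exp_neg_mul_cosh_mul_cosh (hz : 0 < z) :
    IntegrableOn (fun t ↦ exp (-z * cosh t) * cosh t) (Ioi 0) := by
  simpa using integrableOn_besselK_integrand hz 1

lemma hasDerivAt_neg_exp_neg_mul_sinh_div (hz : z ≠ 0) (t : ℝ) :
    HasDerivAt (fun t ↦ -exp (-z * sinh t) / z) (exp (-z * sinh t) * cosh t) t := by
  refine ((hasDerivAt_sinh t).const_mul (-z)).exp.neg.div_const z |>.congr_deriv ?_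
  field

lemma tendsto_neg_exp_neg_mul_sinh_div (hz : 0 < z) :
    Tendsto (fun t ↦ -exp (-z * sinh t) / z) atTop (𝓝 0) := by
  have h_sinh : Tendsto sinh atTop atTop :=
    tendsto_atTop_mono' _ ((eventually_ge_atTop 0).mono fun _ ↦ self_le_sinh_iff.2) tendsto_id
  simpa using (tendsto_exp_atBot.comp
    (h_sinh.const_mul_atTop_of_neg (neg_lt_zero.2 hz))).neg.div_const z

lemma integrableOn_exp_neg_mul_sinh_mul_cosh (hz : 0 < z) :
    IntegrableOn (fun t ↦ exp (-z * sinh t) * cosh t) (Ioi 0) :=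
  integrableOn_Ioi_deriv_of_nonneg' (fun t _ ↦ hasDerivAt_neg_exp_neg_mul_sinh_div hz.ne' t)
    (fun t _ ↦ mul_nonneg (exp_pos _).le (cosh_pos t).le) (tendsto_neg_exp_neg_mul_sinh_div hz)

lemma integral_exp_neg_mul_sinh_mul_cosh (hz : 0 < z) :
    ∫ t in Ioi 0, exp (-z * sinh t) * cosh t = z⁻¹ := by
  rw [integral_Ioi_of_hasDerivAt_of_tendsto'
    (fun t _ ↦ hasDerivAt_neg_exp_neg_mul_sinh_div hz.ne' t)
    (integrableOn_exp_neg_mul_sinh_mul_cosh hz) (tendsto_neg_exp_neg_mul_sinh_div hz)]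
  simp [neg_div]

end Integrands

section BesselK

variable {z w : ℝ}

lemma besselK_zero_eq (z : ℝ) : besselK 0 z = ∫ t in Ioi 0, exp (-z * cosh t) := by
  simp [besselK]

lemma besselK_one_eq (z : ℝ) : besselK 1 z = ∫ t in Ioi 0, exp (-z * cosh t) * cosh t := by
  simp [besselK]

lemma besselK_nonneg (j : ℕ) (z : ℝ) : 0 ≤ besselK j z :=
  integral_nonneg fun _ ↦ mul_nonneg (exp_pos _).le (cosh_pos _).le

lemma antitoneOn_besselK (j : ℕ) : AntitoneOn (besselK j) (Ioi 0) := by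
  intro z hz w hw hzw
  refine integral_mono (integrableOn_besselK_integrand hw j)
    (integrableOn_besselK_integrand hz j) fun t ↦ ?_
  have := cosh_pos t
  have := cosh_pos (j * t)
  dsimp only
  gcongr

lemma besselK_le_besselK_of_le {i j : ℕ} (hz : 0 < z) (hij : i ≤ j) :
    besselK i z ≤ besselK j z := by
  refine integral_mono (integrableOn_besselK_integrand hz i)
    (integrableOn_besselK_integrand hz j) fun t ↦ ?_
  have h_cosh : cosh (i * t) ≤ cosh (j * t) := by
    rw [cosh_le_cosh, abs_mul, abs_mul, Nat.abs_cast, Nat.abs_cast]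
    gcongr
  dsimp only
  gcongr

lemma two_mul_sinh_mul_sinh (x y : ℝ) : 2 * (sinh x * sinh y) = cosh (y + x) - cosh (y - x) := by
  rw [cosh_add, cosh_sub]
  ring

lemma hasDerivAt_exp_neg_mul_cosh_mul_sinh (z : ℝ) (j : ℕ) (t : ℝ) :
    HasDerivAt (fun t ↦ exp (-z * cosh t) * sinh ((j + 1 : ℕ) * t))
      ((j + 1 : ℕ) * (exp (-z * cosh t) * cosh ((j + 1 : ℕ) * t)) -
        z / 2 * (exp (-z * cosh t) * cosh ((j + 2 : ℕ) * t) -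
          exp (-z * cosh t) * cosh (j * t))) t := by
  refine (((hasDerivAt_cosh t).const_mul (-z)).exp.mul
    ((hasDerivAt_id' t).const_mul ((j + 1 : ℕ) : ℝ)).sinh).congr_deriv ?_
  have h_sinh := two_mul_sinh_mul_sinh t ((j + 1 : ℕ) * t)
  have h_add : ((j + 1 : ℕ) : ℝ) * t + t = (j + 2 : ℕ) * t := by push_cast; ring
  have h_sub : ((j + 1 : ℕ) : ℝ) * t - t = j * t := by push_cast; ring
  rw [h_add, h_sub] at h_sinh
  linear_combination -(z / 2) * exp (-z * cosh t) * h_sinh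

-- Integrate the derivative of `exp (-z * cosh t) * sinh ((j + 1) * t)` over `(0, ∞)`.
lemma mul_besselK_add_two_sub (hz : 0 < z) (j : ℕ) :
    z * (besselK (j + 2) z - besselK j z) = 2 * (j + 1) * besselK (j + 1) z := by
  have h_lim : Tendsto (fun t ↦ exp (-z * cosh t) * sinh ((j + 1 : ℕ) * t)) atTop (𝓝 0) :=
    (isBigO_exp_neg_mul_cosh_mul hz (isBigO_sinh_mul (j + 1).cast_nonneg)).trans_tendsto
      tendsto_exp_neg_atTop_nhds_zero
  have h_int := integrableOn_besselK_integrand hz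
  have h_int_sub : IntegrableOn (fun t ↦ z / 2 * (exp (-z * cosh t) * cosh ((j + 2 : ℕ) * t) -
      exp (-z * cosh t) * cosh (j * t))) (Ioi 0) :=
    ((h_int (j + 2)).sub (h_int j)).const_mul (z / 2)
  have h_ftc := integral_Ioi_of_hasDerivAt_of_tendsto' (a := 0)
    (fun t _ ↦ hasDerivAt_exp_neg_mul_cosh_mul_sinh z j t)
    (((h_int (j + 1)).const_mul _).sub h_int_sub) h_lim
  rw [integral_sub ((h_int (j + 1)).const_mul _) h_int_sub, integral_const_mul,
    integral_const_mul, integral_sub (h_int (j + 2)) (h_int j)] at h_ftc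
  rw [← besselK, ← besselK, ← besselK, mul_zero, sinh_zero, mul_zero, sub_zero] at h_ftc
  push_cast at h_ftc
  linarith

lemma hasDerivAt_besselK (hz : 0 < z) (j : ℕ) :
    HasDerivAt (besselK j) (-∫ t in Ioi 0, exp (-z * cosh t) * (cosh t * cosh (j * t))) z := by
  have h_bound {t x : ℝ} (hx : x ∈ Ioi (z / 2)) :
      ‖-(exp (-x * cosh t) * (cosh t * cosh (j * t)))‖ ≤
        exp (-(z / 2) * cosh t) * (cosh t * cosh (j * t)) := by
    have := cosh_pos t
    have := cosh_pos (j * t)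
    rw [norm_neg, norm_of_nonneg (by positivity)]
    gcongr
    exact hx.le
  have h_bound_int : IntegrableOn
      (fun t ↦ exp (-(z / 2) * cosh t) * (cosh t * cosh (j * t))) (Ioi 0) := by
    refine integrableOn_exp_neg_mul_cosh_mul (c := 1 + j) (half_pos hz) (by fun_prop) ?_
    simpa [add_mul, exp_add] using
      (isBigO_cosh_mul zero_le_one).mul (isBigO_cosh_mul j.cast_nonneg)
  have h_deriv (x t : ℝ) : HasDerivAt (fun x ↦ exp (-x * cosh t) * cosh (j * t))
      (-(exp (-x * cosh t) * (cosh t * cosh (j * t)))) x := by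
    refine ((hasDerivAt_neg x).mul_const (cosh t)).exp.mul_const (cosh (j * t)) |>.congr_deriv ?_
    ring
  rw [← integral_neg]
  exact (hasDerivAt_integral_of_dominated_loc_of_deriv_le
    (F := fun x t ↦ exp (-x * cosh t) * cosh (j * t))
    (F' := fun x t ↦ -(exp (-x * cosh t) * (cosh t * cosh (j * t))))
    (Ioi_mem_nhds (half_lt_self hz))
    (.of_forall fun _ ↦ Continuous.aestronglyMeasurable (by fun_prop))
    (integrableOn_besselK_integrand hz j) (Continuous.aestronglyMeasurable (by fun_prop))
    (.of_forall fun _ _ ↦ h_bound) h_bound_int (.of_forall fun t x _ ↦ h_deriv x t)).2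

lemma hasDerivAt_besselK_zero (hz : 0 < z) : HasDerivAt (besselK 0) (-besselK 1 z) z := by
  simpa [besselK_one_eq] using hasDerivAt_besselK hz 0

lemma exp_neg_mul_cosh_eq (z t : ℝ) :
    exp (-z * cosh t) = exp (-z * sinh t) * exp (-(z * exp (-t))) := by
  rw [← exp_add, ← cosh_sub_sinh]
  ring_nf

lemma besselK_one_le_inv (hz : 0 < z) : besselK 1 z ≤ z⁻¹ := by
  rw [besselK_one_eq, ← integral_exp_neg_mul_sinh_mul_cosh hz]
  refine integral_mono (integrableOn_exp_neg_mul_cosh_mul_cosh hz)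
    (integrableOn_exp_neg_mul_sinh_mul_cosh hz) fun t ↦ ?_
  have := cosh_pos t
  have := (sinh_lt_cosh t).le
  dsimp only
  gcongr ?_ * _
  exact exp_le_exp.2 (by nlinarith)

lemma exp_neg_mul_inv_le_besselK_one (hz : 0 < z) : exp (-z) * z⁻¹ ≤ besselK 1 z := by
  rw [besselK_one_eq, ← integral_exp_neg_mul_sinh_mul_cosh hz, ← integral_const_mul]
  refine setIntegral_mono_on ((integrableOn_exp_neg_mul_sinh_mul_cosh hz).const_mul _)
    (integrableOn_exp_neg_mul_cosh_mul_cosh hz) measurableSet_Ioi fun t (ht : 0 < t) ↦ ?_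
  have h_exp : exp (-z) ≤ exp (-(z * exp (-t))) :=
    exp_le_exp.2 (neg_le_neg (mul_le_of_le_one_right hz.le (exp_le_one_iff.2 (by linarith))))
  have := cosh_pos t
  calc exp (-z) * (exp (-z * sinh t) * cosh t)
      ≤ exp (-(z * exp (-t))) * (exp (-z * sinh t) * cosh t) := by gcongr
    _ = exp (-z * cosh t) * cosh t := by rw [exp_neg_mul_cosh_eq]; ring

lemma exp_sub_one_le_mul_exp (x : ℝ) : exp x - 1 ≤ x * exp x := by
  have h_tangent := mul_le_mul_of_nonneg_right (one_sub_le_exp_neg x) (exp_pos x).le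
  rw [← exp_add, neg_add_cancel, exp_zero] at h_tangent
  linarith

lemma inv_sub_besselK_one_le (hz : 0 < z) : z⁻¹ - besselK 1 z ≤ z * exp z * besselK 0 z := by
  have h_sinh := integrableOn_exp_neg_mul_sinh_mul_cosh hz
  have h_cosh := integrableOn_exp_neg_mul_cosh_mul_cosh hz
  rw [besselK_one_eq, besselK_zero_eq, ← integral_exp_neg_mul_sinh_mul_cosh hz,
    ← integral_sub h_sinh h_cosh, ← integral_const_mul]
  refine setIntegral_mono_on (h_sinh.sub h_cosh)
    ((integrableOn_exp_neg_mul_cosh hz).const_mul _) measurableSet_Ioi fun t (ht : 0 < t) ↦ ?_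
  set q := exp (-t) with hq
  have hq_le : z * q ≤ z := mul_le_of_le_one_right hz.le (exp_le_one_iff.2 (by linarith))
  have h_cosh_q : cosh t * q ≤ 1 := by
    have : q * exp t = 1 := by rw [hq, ← exp_add]; simp
    have : q ≤ 1 := exp_le_one_iff.2 (by linarith)
    rw [cosh_eq, ← hq]
    nlinarith [exp_pos (-t)]
  have h_split : exp (-z * sinh t) = exp (-z * cosh t) * exp (z * q) := by
    rw [exp_neg_mul_cosh_eq, mul_assoc, ← exp_add, neg_add_cancel, exp_zero, mul_one]
  have := cosh_pos t
  calc exp (-z * sinh t) * cosh t - exp (-z * cosh t) * cosh t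
      = exp (-z * cosh t) * cosh t * (exp (z * q) - 1) := by rw [h_split]; ring
    _ ≤ exp (-z * cosh t) * cosh t * (z * q * exp z) := by
        gcongr
        exact (exp_sub_one_le_mul_exp _).trans (by gcongr)
    _ = z * exp z * exp (-z * cosh t) * (cosh t * q) := by ring
    _ ≤ z * exp z * exp (-z * cosh t) * 1 := by gcongr
    _ = z * exp z * exp (-z * cosh t) := mul_one _

lemma hasDerivAt_log_add_besselK_zero (hz : 0 < z) :
    HasDerivAt (fun x ↦ log x + besselK 0 x) (z⁻¹ - besselK 1 z) z := by
  rw [sub_eq_add_neg]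
  exact (hasDerivAt_log hz.ne').add (hasDerivAt_besselK_zero hz)

lemma monotoneOn_log_add_besselK_zero : MonotoneOn (fun x ↦ log x + besselK 0 x) (Ioi 0) := by
  refine monotoneOn_of_deriv_nonneg (convex_Ioi 0)
    (fun x hx ↦ (hasDerivAt_log_add_besselK_zero hx).continuousAt.continuousWithinAt) ?_ ?_ <;>
    rw [interior_Ioi]
  · exact fun x hx ↦ (hasDerivAt_log_add_besselK_zero hx).differentiableAt.differentiableWithinAt
  · intro x hx
    rw [(hasDerivAt_log_add_besselK_zero hx).deriv]
    exact sub_nonneg.2 (besselK_one_le_inv hx)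

lemma log_add_besselK_zero_sub_le (hz : 0 < z) (hzw : z ≤ w) :
    log w + besselK 0 w - (log z + besselK 0 z) ≤ w * exp w * besselK 0 z * (w - z) := by
  have h_deriv {x : ℝ} (hx : z ≤ x) := hasDerivAt_log_add_besselK_zero (hz.trans_le hx)
  refine (convex_Icc z w).image_sub_le_mul_sub_of_deriv_le
    (fun x hx ↦ (h_deriv hx.1).continuousAt.continuousWithinAt) ?_ ?_ z
    (left_mem_Icc.2 hzw) w (right_mem_Icc.2 hzw) hzw <;> rw [interior_Icc]
  · exact fun x hx ↦ (h_deriv hx.1.le).differentiableAt.differentiableWithinAt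
  · rintro x ⟨hzx, hxw⟩
    have hx : 0 < x := hz.trans hzx
    have hw : 0 < w := hx.trans hxw
    have h_anti : besselK 0 x ≤ besselK 0 z := antitoneOn_besselK 0 hz hx hzx.le
    have := besselK_nonneg 0 x
    rw [(h_deriv hzx.le).deriv]
    calc x⁻¹ - besselK 1 x ≤ x * exp x * besselK 0 x := inv_sub_besselK_one_le hx
      _ ≤ w * exp w * besselK 0 z := by gcongr

end BesselK

/-- The eigenvalue `λ^{δ,n}` of the `δ`-regularized slender-body approximation, as a function of
`z = πεk`. -/
noncomputable def regularizedNormalEigenvalue (δ z : ℝ) : ℝ :=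
  8 * π / (1 + 2 * log δ + 2 * besselK 0 (δ * z))

section Regularized

variable {δ z : ℝ}

lemma regularizedNormalEigenvalue_one (z : ℝ) :
    regularizedNormalEigenvalue 1 z = 8 * π / (1 + 2 * besselK 0 z) := by
  simp [regularizedNormalEigenvalue]

lemma regularizedNormalEigenvalue_mem_Icc (hδ : 1 ≤ δ) (z : ℝ) :
    regularizedNormalEigenvalue δ z ∈ Icc 0 (8 * π) := by
  have := log_nonneg hδ
  have := besselK_nonneg 0 (δ * z)
  exact ⟨by unfold regularizedNormalEigenvalue; positivity,
    div_le_self (by positivity) (by linarith)⟩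

lemma besselK_zero_le_log_add_besselK_zero (hδ : 1 ≤ δ) (hz : 0 < z) :
    besselK 0 z ≤ log δ + besselK 0 (δ * z) := by
  have hδ_pos : 0 < δ := one_pos.trans_le hδ
  have h_mono := monotoneOn_log_add_besselK_zero hz (mul_pos hδ_pos hz)
    (le_mul_of_one_le_left hz.le hδ)
  simp only [log_mul hδ_pos.ne' hz.ne'] at h_mono
  linarith

lemma log_add_besselK_zero_sub_besselK_zero_le (hδ : 1 ≤ δ) (hz : 0 < z) :
    log δ + besselK 0 (δ * z) - besselK 0 z ≤ (δ * z) ^ 2 * exp (δ * z) * besselK 0 z := by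
  have hδ_pos : 0 < δ := one_pos.trans_le hδ
  have h_diff := log_add_besselK_zero_sub_le hz (le_mul_of_one_le_left hz.le hδ)
  rw [log_mul hδ_pos.ne' hz.ne'] at h_diff
  have : 0 ≤ δ * z * exp (δ * z) * besselK 0 z * z := by
    have := besselK_nonneg 0 z
    positivity
  linarith

lemma abs_regularizedNormalEigenvalue_one_sub_le (hδ : 1 ≤ δ) (hz : 0 < z) :
    |regularizedNormalEigenvalue 1 z - regularizedNormalEigenvalue δ z| ≤
      24 * π * (δ * z) ^ 2 := by
  rcases le_total 1 (δ * z) with h_large | h_small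
  · obtain ⟨h1_nonneg, h1_le⟩ := regularizedNormalEigenvalue_mem_Icc le_rfl z
    obtain ⟨hδ_nonneg, hδ_le⟩ := regularizedNormalEigenvalue_mem_Icc hδ z
    refine (abs_sub_le_of_nonneg_of_le h1_nonneg h1_le hδ_nonneg hδ_le).trans ?_
    nlinarith [pi_pos, one_le_pow₀ h_large (n := 2)]
  have hΔ_nonneg := sub_nonneg.2 (besselK_zero_le_log_add_besselK_zero hδ hz)
  have hΔ_le : log δ + besselK 0 (δ * z) - besselK 0 z ≤ (δ * z) ^ 2 * 3 * besselK 0 z := by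
    have := besselK_nonneg 0 z
    refine (log_add_besselK_zero_sub_besselK_zero_le hδ hz).trans ?_
    gcongr
    exact (exp_le_exp.2 h_small).trans exp_one_lt_three.le
  have ha := besselK_nonneg 0 z
  rw [regularizedNormalEigenvalue_one, regularizedNormalEigenvalue]
  set a := besselK 0 z
  set Δ := log δ + besselK 0 (δ * z) - a with hΔ
  have h_eq : 8 * π / (1 + 2 * a) - 8 * π / (1 + 2 * log δ + 2 * besselK 0 (δ * z)) =
      16 * π * Δ / ((1 + 2 * a) * (1 + 2 * a + 2 * Δ)) := by
    rw [show 1 + 2 * log δ + 2 * besselK 0 (δ * z) = 1 + 2 * a + 2 * Δ by rw [hΔ]; ring]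
    field
  rw [h_eq, abs_of_nonneg (by positivity)]
  refine div_le_of_le_mul₀ (by positivity) (by positivity) ?_
  calc 16 * π * Δ ≤ 16 * π * ((δ * z) ^ 2 * 3 * a) := by gcongr
    _ = 24 * π * (δ * z) ^ 2 * (2 * a * 1) := by ring
    _ ≤ 24 * π * (δ * z) ^ 2 * ((1 + 2 * a) * (1 + 2 * a + 2 * Δ)) := by
        gcongr <;> linarith

end Regularized

/-- The eigenvalue `λⁿ` of the slender-body PDE operator, as a function of `z = πεk`. -/
noncomputable def stokesNormalEigenvalue (z : ℝ) : ℝ :=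
  2 * π * z *
    ((4 * besselK 1 z ^ 2 * besselK 2 z +
        z * besselK 1 z * (besselK 1 z ^ 2 - besselK 0 z * besselK 2 z)) /
      (2 * besselK 0 z * besselK 1 z * besselK 2 z +
        z * (besselK 1 z ^ 2 * (besselK 0 z + besselK 2 z) -
          2 * besselK 0 z ^ 2 * besselK 2 z)))

/-- Numerator of `λⁿ / π` once `K₂` is eliminated, in terms of `a = K₀(z)` and `b = z * K₁(z)`. -/
def scaledNumerator (z a b : ℝ) : ℝ :=
  b * (8 * b ^ 2 + 2 * z ^ 2 * a * b + z ^ 2 * (b ^ 2 - (z * a) ^ 2))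

/-- Denominator of `λⁿ / π` once `K₂` is eliminated, in terms of `a = K₀(z)` and `b = z * K₁(z)`.
Every term is nonnegative because `K₀ ≤ K₁`. -/
def scaledDenominator (z a b : ℝ) : ℝ :=
  2 * a * b ^ 2 + (z ^ 2 * a + b) * (b ^ 2 - (z * a) ^ 2)

section ScaledQuotient

variable {z a b : ℝ}

lemma scaledNumerator_nonneg (ha : 0 ≤ a) (hz : 0 ≤ z) (hab : z * a ≤ b) :
    0 ≤ scaledNumerator z a b := by
  have hb : 0 ≤ b := (mul_nonneg hz ha).trans hab
  have : 0 ≤ b ^ 2 - (z * a) ^ 2 := sub_nonneg.2 (by gcongr)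
  unfold scaledNumerator
  positivity

lemma scaledDenominator_nonneg (ha : 0 ≤ a) (hz : 0 ≤ z) (hab : z * a ≤ b) :
    0 ≤ scaledDenominator z a b := by
  have hb : 0 ≤ b := (mul_nonneg hz ha).trans hab
  have : 0 ≤ b ^ 2 - (z * a) ^ 2 := sub_nonneg.2 (by gcongr)
  unfold scaledDenominator
  positivity

lemma scaledNumerator_le (ha : 0 ≤ a) (hz : 1 ≤ z) (hab : z * a ≤ b) :
    scaledNumerator z a b ≤ 9 * z ^ 2 * scaledDenominator z a b := by
  have haz : a ≤ z * a := le_mul_of_one_le_left ha hz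
  have hb : 0 ≤ b := ha.trans (haz.trans hab)
  have hs : 0 ≤ b ^ 2 - (z * a) ^ 2 := sub_nonneg.2 (by gcongr)
  have h_cubic : 8 * b ^ 3 ≤ z ^ 2 * (8 * b * (b ^ 2 - (z * a) ^ 2) + 16 * a * b ^ 2) := by
    have h_one : b ^ 2 ≤ b ^ 2 - (z * a) ^ 2 + z ^ 2 * (2 * a * b) := by
      nlinarith [mul_nonneg (mul_nonneg ha (sq_nonneg z)) (sub_nonneg.2 (haz.trans hab)),
        mul_nonneg (mul_nonneg ha (sq_nonneg z)) hb]
    nlinarith [mul_nonneg hb (sub_nonneg.2 h_one),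
      mul_nonneg (mul_nonneg hb hs) (sub_nonneg.2 (one_le_pow₀ hz (n := 2)))]
  have : 0 ≤ 9 * z ^ 4 * a * (b ^ 2 - (z * a) ^ 2) := by positivity
  unfold scaledNumerator scaledDenominator
  linarith

lemma le_scaledDenominator (ha : 0 ≤ a) (hz : 0 ≤ z) (hz1 : z ≤ 1) (hab : z * a ≤ b)
    (hb : 1 / 3 ≤ b) : (1 + 2 * a) / 27 ≤ scaledDenominator z a b := by
  have hs : 0 ≤ b ^ 2 - (z * a) ^ 2 := sub_nonneg.2 (by gcongr)
  calc (1 + 2 * a) / 27 ≤ a * (1 / 3) ^ 2 + (1 / 3) ^ 3 := by linarith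
    _ ≤ a * b ^ 2 + b ^ 3 := by gcongr
    _ ≤ a * b ^ 2 + b ^ 3 + b * (a * b * (1 - z)) + b * (z * a) * (b - z * a) := by
        have := sub_nonneg.2 hz1
        have := sub_nonneg.2 hab
        have : 0 ≤ b := by linarith
        linarith [show 0 ≤ b * (a * b * (1 - z)) + b * (z * a) * (b - z * a) by positivity]
    _ = 2 * a * b ^ 2 + b * (b ^ 2 - (z * a) ^ 2) := by ring
    _ ≤ scaledDenominator z a b := by
        unfold scaledDenominator
        gcongr
        exact le_add_of_nonneg_left (by positivity)

-- The leading term `16 a b ^ 2` cancels up to a factor `1 - b`, which is `O(z ^ 2 * a)`.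
lemma abs_scaledNumerator_sub_le (ha : 0 ≤ a) (hz : 0 ≤ z) (hab : z * a ≤ b) (hb1 : b ≤ 1)
    (hb : 1 - b ≤ 3 * z ^ 2 * a) :
    |scaledNumerator z a b * (1 + 2 * a) - 8 * scaledDenominator z a b| ≤
      12 * z ^ 2 * (1 + 2 * a) ^ 2 := by
  have hb0 : 0 ≤ b := (mul_nonneg hz ha).trans hab
  have hb_sq : b ^ 2 ≤ 1 := pow_le_one₀ hb0 hb1
  set s := b ^ 2 - (z * a) ^ 2 with hs
  have hs0 : 0 ≤ s := sub_nonneg.2 (by gcongr)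
  have hs1 : s ≤ 1 := by linarith [sq_nonneg (z * a)]
  have h_expand : scaledNumerator z a b * (1 + 2 * a) - 8 * scaledDenominator z a b =
      z ^ 2 * ((1 + 2 * a) * (b * (2 * a * b + s)) + 8 * a ^ 2 * b) -
        (16 * a * b ^ 2 * (1 - b) + 8 * z ^ 2 * a * s) := by
    rw [scaledNumerator, scaledDenominator, ← hs, hs]
    ring
  have h_pos_part : z ^ 2 * ((1 + 2 * a) * (b * (2 * a * b + s)) + 8 * a ^ 2 * b) ≤
      12 * z ^ 2 * (1 + 2 * a) ^ 2 := by
    calc _ ≤ z ^ 2 * ((1 + 2 * a) * (1 * (2 * a * 1 + 1)) + 8 * a ^ 2 * 1) := by gcongr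
      _ ≤ z ^ 2 * (12 * (1 + 2 * a) ^ 2) := by gcongr; nlinarith
      _ = _ := by ring
  have h_neg_part : 16 * a * b ^ 2 * (1 - b) + 8 * z ^ 2 * a * s ≤
      12 * z ^ 2 * (1 + 2 * a) ^ 2 := by
    calc _ ≤ 16 * a * 1 * (3 * z ^ 2 * a) + 8 * z ^ 2 * a * 1 := by
          gcongr
      _ = z ^ 2 * (48 * a ^ 2 + 8 * a) := by ring
      _ ≤ z ^ 2 * (12 * (1 + 2 * a) ^ 2) := by gcongr; nlinarith
      _ = _ := by ring
  have h_pos_nonneg : 0 ≤ z ^ 2 * ((1 + 2 * a) * (b * (2 * a * b + s)) + 8 * a ^ 2 * b) := by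
    positivity
  have h_neg_nonneg : 0 ≤ 16 * a * b ^ 2 * (1 - b) + 8 * z ^ 2 * a * s := by
    have := sub_nonneg.2 hb1
    positivity
  rw [h_expand]
  exact abs_sub_le_of_nonneg_of_le h_pos_nonneg h_pos_part h_neg_nonneg h_neg_part

lemma abs_scaledNumerator_div_scaledDenominator_sub_le (ha : 0 ≤ a) (hz : 0 ≤ z) (hz1 : z ≤ 1)
    (hab : z * a ≤ b) (hb3 : 1 / 3 ≤ b) (hb1 : b ≤ 1) (hb : 1 - b ≤ 3 * z ^ 2 * a) :
    |scaledNumerator z a b / scaledDenominator z a b - 8 / (1 + 2 * a)| ≤ 324 * z ^ 2 := by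
  have hD := le_scaledDenominator ha hz hz1 hab hb3
  have hD_pos : 0 < scaledDenominator z a b := lt_of_lt_of_le (by positivity) hD
  have ha_pos : 0 < 1 + 2 * a := by positivity
  rw [div_sub_div _ _ hD_pos.ne' ha_pos.ne', abs_div, abs_of_pos (mul_pos hD_pos ha_pos),
    div_le_iff₀ (mul_pos hD_pos ha_pos), mul_comm _ (8 : ℝ)]
  calc _ ≤ 12 * z ^ 2 * (1 + 2 * a) ^ 2 := abs_scaledNumerator_sub_le ha hz hab hb1 hb
    _ = 324 * z ^ 2 * ((1 + 2 * a) / 27 * (1 + 2 * a)) := by ring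
    _ ≤ _ := by gcongr

end ScaledQuotient

section Stokes

variable {δ z : ℝ}

lemma mul_besselK_zero_le_mul_besselK_one (hz : 0 < z) :
    z * besselK 0 z ≤ z * besselK 1 z :=
  mul_le_mul_of_nonneg_left (besselK_le_besselK_of_le hz zero_le_one) hz.le

lemma stokesNormalEigenvalue_eq (hz : 0 < z) :
    stokesNormalEigenvalue z =
      π * (scaledNumerator z (besselK 0 z) (z * besselK 1 z) /
        scaledDenominator z (besselK 0 z) (z * besselK 1 z)) := by
  have h_two : besselK 2 z = besselK 0 z + 2 * besselK 1 z / z := by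
    have := mul_besselK_add_two_sub hz 0
    norm_num at this
    field_simp
    linarith
  rw [stokesNormalEigenvalue, h_two, scaledNumerator, scaledDenominator]
  generalize besselK 0 z = a
  generalize besselK 1 z = k
  have h_num : 4 * k ^ 2 * (a + 2 * k / z) + z * k * (k ^ 2 - a * (a + 2 * k / z)) =
      z * k * (8 * (z * k) ^ 2 + 2 * z ^ 2 * a * (z * k) +
        z ^ 2 * ((z * k) ^ 2 - (z * a) ^ 2)) / z ^ 4 := by
    field
  have h_den : 2 * a * k * (a + 2 * k / z) +
        z * (k ^ 2 * (a + (a + 2 * k / z)) - 2 * a ^ 2 * (a + 2 * k / z)) =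
      2 * (2 * a * (z * k) ^ 2 + (z ^ 2 * a + z * k) * ((z * k) ^ 2 - (z * a) ^ 2)) / z ^ 3 := by
    field
  rw [h_num, h_den]
  generalize 2 * a * (z * k) ^ 2 + (z ^ 2 * a + z * k) * ((z * k) ^ 2 - (z * a) ^ 2) = D
  field

lemma stokesNormalEigenvalue_mem_Icc (hz : 1 ≤ z) :
    stokesNormalEigenvalue z ∈ Icc 0 (9 * π * z ^ 2) := by
  have hz0 : 0 < z := one_pos.trans_le hz
  have ha := besselK_nonneg 0 z
  have hab := mul_besselK_zero_le_mul_besselK_one hz0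
  have hD := scaledDenominator_nonneg ha hz0.le hab
  rw [stokesNormalEigenvalue_eq hz0]
  refine ⟨mul_nonneg pi_pos.le (div_nonneg (scaledNumerator_nonneg ha hz0.le hab) hD), ?_⟩
  calc _ ≤ π * (9 * z ^ 2) := by
        gcongr
        exact div_le_of_le_mul₀ hD (by positivity) (scaledNumerator_le ha hz hab)
    _ = 9 * π * z ^ 2 := by ring

lemma abs_stokesNormalEigenvalue_sub_regularized_one_le_of_le_one (hz : 0 < z) (hz1 : z ≤ 1) :
    |stokesNormalEigenvalue z - regularizedNormalEigenvalue 1 z| ≤ 324 * π * z ^ 2 := by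
  have h_exp : exp z ≤ 3 := (exp_le_exp.2 hz1).trans exp_one_lt_three.le
  have ha := besselK_nonneg 0 z
  have hab := mul_besselK_zero_le_mul_besselK_one hz
  have hb_le_one : z * besselK 1 z ≤ 1 := by
    simpa [hz.ne'] using mul_le_mul_of_nonneg_left (besselK_one_le_inv hz) hz.le
  have hb_ge : 1 / 3 ≤ z * besselK 1 z := by
    calc (1 / 3 : ℝ) ≤ exp (-z) := by
          rw [exp_neg, ← one_div]
          gcongr
      _ = z * (exp (-z) * z⁻¹) := by field
      _ ≤ z * besselK 1 z := by
          gcongr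
          exact exp_neg_mul_inv_le_besselK_one hz
  have hb_close : 1 - z * besselK 1 z ≤ 3 * z ^ 2 * besselK 0 z := by
    calc 1 - z * besselK 1 z = z * (z⁻¹ - besselK 1 z) := by field
      _ ≤ z * (z * exp z * besselK 0 z) := by
          gcongr
          exact inv_sub_besselK_one_le hz
      _ = exp z * z ^ 2 * besselK 0 z := by ring
      _ ≤ 3 * z ^ 2 * besselK 0 z := by gcongr
  rw [stokesNormalEigenvalue_eq hz, regularizedNormalEigenvalue_one, mul_comm 8 π, mul_div_assoc,
    ← mul_sub, abs_mul, abs_of_pos pi_pos, mul_comm 324 π, mul_assoc]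
  gcongr
  exact abs_scaledNumerator_div_scaledDenominator_sub_le ha hz.le hz1 hab hb_ge hb_le_one hb_close

lemma abs_stokesNormalEigenvalue_sub_regularized_one_le (hz : 0 < z) :
    |stokesNormalEigenvalue z - regularizedNormalEigenvalue 1 z| ≤ 324 * π * z ^ 2 := by
  rcases le_total z 1 with h_small | h_large
  · exact abs_stokesNormalEigenvalue_sub_regularized_one_le_of_le_one hz h_small
  obtain ⟨h_stokes_nonneg, h_stokes_le⟩ := stokesNormalEigenvalue_mem_Icc h_large
  obtain ⟨h_reg_nonneg, h_reg_le⟩ := regularizedNormalEigenvalue_mem_Icc le_rfl z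
  have h_sq : π ≤ π * z ^ 2 := le_mul_of_one_le_right pi_pos.le (one_le_pow₀ h_large)
  have := abs_sub_le_of_nonneg_of_le h_stokes_nonneg h_stokes_le h_reg_nonneg (by linarith)
  linarith [pi_pos]

theorem delta_reg_stokes_normal_eigenvalue_difference_refined_general (hδ : 1 ≤ δ) (hz : 0 < z) :
    |stokesNormalEigenvalue z - regularizedNormalEigenvalue δ z| ≤ 348 * π * (δ * z) ^ 2 := by
  calc _ ≤ |stokesNormalEigenvalue z - regularizedNormalEigenvalue 1 z| +
          |regularizedNormalEigenvalue 1 z - regularizedNormalEigenvalue δ z| := abs_sub_le _ _ _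
    _ ≤ 324 * π * z ^ 2 + 24 * π * (δ * z) ^ 2 :=
        add_le_add (abs_stokesNormalEigenvalue_sub_regularized_one_le hz)
          (abs_regularizedNormalEigenvalue_one_sub_le hδ hz)
    _ ≤ 324 * π * (δ * z) ^ 2 + 24 * π * (δ * z) ^ 2 := by
        gcongr
        exact le_mul_of_one_le_left hz.le hδ
    _ = 348 * π * (δ * z) ^ 2 := by ring

end Stokes

theorem delta_reg_stokes_normal_eigenvalue_difference_refined :
    ∃ C : ℝ, 0 < C ∧ ∀ δ : ℝ, Real.sqrt (Real.exp 1) < δ → ∀ ε : ℝ, 0 < ε →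
      ∀ k : ℕ, 1 ≤ k → π * ε * (k : ℝ) ≤ 2 / 3 →
      |2 * π ^ 2 * ε * (k : ℝ) *
            ((4 * (besselK 1 (π * ε * (k : ℝ))) ^ 2 * besselK 2 (π * ε * (k : ℝ)) +
                π * ε * (k : ℝ) * besselK 1 (π * ε * (k : ℝ)) *
                  ((besselK 1 (π * ε * (k : ℝ))) ^ 2 -
                    besselK 0 (π * ε * (k : ℝ)) * besselK 2 (π * ε * (k : ℝ)))) /
              (2 * besselK 0 (π * ε * (k : ℝ)) * besselK 1 (π * ε * (k : ℝ)) *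
                  besselK 2 (π * ε * (k : ℝ)) +
                π * ε * (k : ℝ) *
                  ((besselK 1 (π * ε * (k : ℝ))) ^ 2 *
                      (besselK 0 (π * ε * (k : ℝ)) + besselK 2 (π * ε * (k : ℝ))) -
                    2 * (besselK 0 (π * ε * (k : ℝ))) ^ 2 *
                      besselK 2 (π * ε * (k : ℝ))))) -
          8 * π / (1 + 2 * Real.log δ + 2 * besselK 0 (δ * π * ε * (k : ℝ)))| ≤
        C * δ ^ 2 * (1 + Real.log δ) * ε ^ 2 * (k : ℝ) ^ 2 := by
  refine ⟨348 * π ^ 3, by positivity, fun δ hδ ε hε k hk _ ↦ ?_⟩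
  have hδ1 : 1 ≤ δ := (one_le_sqrt.2 (one_le_exp zero_le_one)).trans hδ.le
  have hz : 0 < π * ε * k := by positivity
  calc _ = |stokesNormalEigenvalue (π * ε * k) - regularizedNormalEigenvalue δ (π * ε * k)| := by
        rw [stokesNormalEigenvalue, regularizedNormalEigenvalue]
        ring_nf
    _ ≤ 348 * π * (δ * (π * ε * k)) ^ 2 :=
        delta_reg_stokes_normal_eigenvalue_difference_refined_general hδ1 hz
    _ = 348 * π ^ 3 * δ ^ 2 * 1 * ε ^ 2 * k ^ 2 := by ring
    _ ≤ 348 * π ^ 3 * δ ^ 2 * (1 + log δ) * ε ^ 2 * k ^ 2 := by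
        gcongr
        linarith [log_nonneg hδ1]
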